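/- arXiv:2502.09470 — 4 statements merged into one kernel-verified Lean document; each statement's English description precedes it below -/
import Mathlib

section
/- The real numbers cos(2π/21), cos(8π/21), cos(10π/21) satisfy cos(2π/21) + cos(8π/21) + cos(10π/21) = (1 + √21)/4. -/
open Real

/-!
Write `c k = cos (2πk/21)`, `S = c 1 + c 4 + c 5` and `S' = c 2 + c 8 + c 10`; these are the two
half Gaussian periods of conductor 21, so `S` is quadratic over `ℚ`. The seventh roots of unity give
`c 3 + c 6 + c 9 = -1/2` (`c_seventh`), and the relation `c k + c (k + 7) + c (k - 7) = 0`
(`c_third`) summed over `k = 1, 2, 4` then gives `S + S' = 1/2`. Linearising products,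
`S² = 3/2 + S'/2 + S + (c 3 + c 6 + c 9)`, hence `(4 S - 1)² = 21`, and the sign of
`4 S - 1` is positive because `c 1 > 1/2` and `c 4, c 5 > 0`.
-/

/-- `c k = cos (2πk/21)`, the real part of the `k`-th power of a primitive 21st root of unity. -/
noncomputable def c (k : ℤ) : ℝ := Real.cos (2 * k * Real.pi / 21)

lemma c_mul (a b : ℤ) : c a * c b = (c (a + b) + c (a - b)) / 2 := by
  have h₁ : 2 * ((a + b : ℤ) : ℝ) * π / 21 = 2 * a * π / 21 + 2 * b * π / 21 := by
    push_cast; ring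
  have h₂ : 2 * ((a - b : ℤ) : ℝ) * π / 21 = 2 * a * π / 21 - 2 * b * π / 21 := by
    push_cast; ring
  simp only [c]
  rw [h₁, h₂, Real.cos_add, Real.cos_sub]
  ring

lemma c_neg (k : ℤ) : c (-k) = c k := by
  simp only [c]
  rw [← Real.cos_neg]
  congr 1
  push_cast; ring

lemma c_sub_period (k : ℤ) : c (21 - k) = c k := by
  simp only [c]
  rw [← Real.cos_two_pi_sub]
  congr 1
  push_cast; ring

lemma c_zero : c 0 = 1 := by simp [c]

lemma c_seven : c 7 = -1 / 2 := by
  have h : (2 * ((7 : ℤ) : ℝ) * π / 21) = π - π / 3 := by push_cast; ring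
  rw [c, h, Real.cos_pi_sub, Real.cos_pi_div_three]
  ring

/-- The cube roots of unity sum to zero. -/
lemma c_third (k : ℤ) : c k + c (k + 7) + c (k - 7) = 0 := by
  have h := c_mul k 7
  rw [c_seven] at h
  linarith

/-- The nontrivial seventh roots of unity sum to `-1`; multiplying by `2 sin (π/7)` telescopes. -/
lemma c_seventh : c 3 + c 6 + c 9 = -1 / 2 := by
  set x := π / 7 with hx
  have hpos : 0 < Real.sin x :=
    Real.sin_pos_of_pos_of_lt_pi (by positivity) (by rw [hx]; linarith [Real.pi_pos])
  have e3 : c 3 = Real.cos (2 * x) := by rw [c]; congr 1; push_cast; ring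
  have e6 : c 6 = Real.cos (4 * x) := by rw [c]; congr 1; push_cast; ring
  have e9 : c 9 = Real.cos (6 * x) := by rw [c]; congr 1; push_cast; ring
  have key (t : ℝ) : 2 * Real.sin x * Real.cos t = Real.sin (t + x) - Real.sin (t - x) := by
    rw [Real.sin_add, Real.sin_sub]; ring
  have k3 := key (2 * x)
  have k6 := key (4 * x)
  have k9 := key (6 * x)
  rw [show 2 * x + x = 3 * x by ring, show 2 * x - x = x by ring] at k3
  rw [show 4 * x + x = 5 * x by ring, show 4 * x - x = 3 * x by ring] at k6
  rw [show 6 * x + x = π by rw [hx]; ring, show 6 * x - x = 5 * x by ring, Real.sin_pi] at k9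
  rw [← e3] at k3
  rw [← e6] at k6
  rw [← e9] at k9
  apply mul_left_cancel₀ (mul_pos two_pos hpos).ne'
  linarith

theorem cos_sum_eq_one_add_sqrt21_div_four :
    Real.cos (2 * Real.pi / 21) + Real.cos (8 * Real.pi / 21) + Real.cos (10 * Real.pi / 21)
      = (1 + Real.sqrt 21) / 4 := by
  have e1 : Real.cos (2 * π / 21) = c 1 := by rw [c]; congr 1; push_cast; ring
  have e4 : Real.cos (8 * π / 21) = c 4 := by rw [c]; congr 1; push_cast; ring
  have e5 : Real.cos (10 * π / 21) = c 5 := by rw [c]; congr 1; push_cast; ring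
  have p1 : 1 / 2 < Real.cos (2 * π / 21) := by
    rw [← Real.cos_pi_div_three]
    apply Real.cos_lt_cos_of_nonneg_of_le_pi <;> linarith [Real.pi_pos]
  have p4 : 0 < Real.cos (8 * π / 21) := by
    apply Real.cos_pos_of_mem_Ioo; constructor <;> linarith [Real.pi_pos]
  have p5 : 0 < Real.cos (10 * π / 21) := by
    apply Real.cos_pos_of_mem_Ioo; constructor <;> linarith [Real.pi_pos]
  rw [e1] at p1
  rw [e4] at p4
  rw [e5] at p5
  rw [e1, e4, e5]
  have t1 := c_third 1
  have t2 := c_third 2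
  have t4 := c_third 4
  have m11 := c_mul 1 1
  have m44 := c_mul 4 4
  have m55 := c_mul 5 5
  have m41 := c_mul 4 1
  have m51 := c_mul 5 1
  have m54 := c_mul 5 4
  have n6 := c_neg 6
  have n5 := c_neg 5
  have n3 := c_neg 3
  have r10 := c_sub_period 10
  have h7 := c_seventh
  norm_num [c_zero] at t1 t2 t4 m11 m44 m55 m41 m51 m54 n6 n5 n3 r10
  have hsq : (4 * (c 1 + c 4 + c 5) - 1) ^ 2 = 21 := by
    linear_combination 16 * (m11 + m44 + m55) + 32 * (m41 + m51 + m54)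
      + 8 * (t1 + t2 + t4) + 8 * h7 - 8 * (n6 + n5 + n3) - 8 * r10
  have hs : Real.sqrt 21 = 4 * (c 1 + c 4 + c 5) - 1 := by
    rw [← hsq]
    exact Real.sqrt_sq (by linarith)
  linarith
end

section
/- The real number (21/625)·(173 + 18√21) = (3633 + 378√21)/625 is not an algebraic integer, i.e., it is not integral over ℤ. -/
/-! If `x = (21/625)(173 + 18√21)` were integral over `ℤ`, so would be its Galois conjugate
`(21/625)(173 - 18√21)`: evaluating an integer polynomial at `a + b√21` and `a - b√21` gives
conjugate values `A ± B√21`, and these vanish together because `√21` is irrational. The trace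
`7266/625` would then be a rational algebraic integer, hence an integer, which it is not. -/

theorem irrational_sqrt_twentyone : Irrational (Real.sqrt 21) := by
  have h : ¬ IsSquare (21 : ℕ) := by
    rintro ⟨r, hr⟩
    have : r < 5 := by nlinarith
    interval_cases r <;> omega
  exact_mod_cast irrational_sqrt_natCast_iff.mpr h

theorem aeval_conj (a b : ℚ) (p : Polynomial ℤ) :
    ∃ A B : ℚ, Polynomial.aeval ((a : ℝ) + b * Real.sqrt 21) p = A + B * Real.sqrt 21 ∧
      Polynomial.aeval ((a : ℝ) - b * Real.sqrt 21) p = A - B * Real.sqrt 21 := by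
  have hs : Real.sqrt 21 * Real.sqrt 21 = 21 := Real.mul_self_sqrt (by norm_num)
  induction p using Polynomial.induction_on with
  | C n => exact ⟨n, 0, by simp, by simp⟩
  | add p q hp hq =>
    obtain ⟨A, B, h1, h2⟩ := hp
    obtain ⟨C, D, h3, h4⟩ := hq
    refine ⟨A + C, B + D, ?_, ?_⟩
    · rw [map_add, h1, h3]; push_cast; ring
    · rw [map_add, h2, h4]; push_cast; ring
  | monomial n c h =>
    obtain ⟨A, B, h1, h2⟩ := h
    refine ⟨A * a + 21 * B * b, A * b + B * a, ?_, ?_⟩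
    · rw [pow_succ, ← mul_assoc, map_mul, h1, Polynomial.aeval_X]
      push_cast
      linear_combination (B * b : ℝ) * hs
    · rw [pow_succ, ← mul_assoc, map_mul, h2, Polynomial.aeval_X]
      push_cast
      linear_combination (B * b : ℝ) * hs

theorem isIntegral_conj (a b : ℚ) (h : IsIntegral ℤ ((a : ℝ) + b * Real.sqrt 21)) :
    IsIntegral ℤ ((a : ℝ) - b * Real.sqrt 21) := by
  obtain ⟨p, hp, h0⟩ := h
  refine ⟨p, hp, ?_⟩
  rw [← Polynomial.aeval_def] at h0 ⊢
  obtain ⟨A, B, h1, h2⟩ := aeval_conj a b p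
  rw [h1] at h0
  have hB : B = 0 := by
    by_contra hB
    have hB' : (B : ℝ) ≠ 0 := by exact_mod_cast hB
    refine irrational_sqrt_twentyone ⟨-A / B, ?_⟩
    push_cast
    rw [div_eq_iff hB']
    linarith
  rw [h2]
  simp only [hB, Rat.cast_zero, zero_mul, add_zero, sub_zero] at h0 ⊢
  exact h0

/-- The real number `(21/625)(173 + 18√21) = (3633 + 378√21)/625` is not an algebraic
integer (not integral over `ℤ`). -/
theorem trace_not_algebraic_integer :
    ((21 / 625) * (173 + 18 * Real.sqrt 21) : ℝ) = (3633 + 378 * Real.sqrt 21) / 625 ∧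
    ¬ IsIntegral ℤ ((21 / 625) * (173 + 18 * Real.sqrt 21) : ℝ) := by
  refine ⟨by ring, fun h => ?_⟩
  have e : ((21 / 625) * (173 + 18 * Real.sqrt 21) : ℝ)
      = ((3633 / 625 : ℚ) : ℝ) + ((378 / 625 : ℚ) : ℝ) * Real.sqrt 21 := by
    push_cast; ring
  rw [e] at h
  have ht := h.add (isIntegral_conj _ _ h)
  have e2 : ((3633 / 625 : ℚ) : ℝ) + ((378 / 625 : ℚ) : ℝ) * Real.sqrt 21 +
      (((3633 / 625 : ℚ) : ℝ) - ((378 / 625 : ℚ) : ℝ) * Real.sqrt 21)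
      = algebraMap ℚ ℝ (7266 / 625) := by
    simp only [eq_ratCast]; push_cast; ring
  rw [e2, isIntegral_algebraMap_iff (algebraMap ℚ ℝ).injective] at ht
  obtain ⟨n, hn⟩ := IsIntegrallyClosed.isIntegral_iff.mp ht
  have hn' : (n : ℚ) * 625 = 7266 := by
    rw [eq_intCast] at hn; rw [hn]; norm_num
  have : n * 625 = 7266 := by exact_mod_cast hn'
  omega
end

section
/- Let M be a right-angled Coxeter matrix on a type B and let W be its Coxeter group. Then every element of W of finite order has order a power of 2. -/
/-!
The proof shows that `W` acts faithfully by unipotent operators in characteristic `2`, through a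
Magnus-type expansion.

On the space `V` of functions `W → ZMod 2`, regarded as formal sums of elements of `W`, let `Xᵢ`
send `v` to `sᵢ v` if this is longer than `v`, and to `0` otherwise. Then `Xᵢ² = 0`, and `Xᵢ`, `Xⱼ`
commute whenever `sᵢ`, `sⱼ` do, since `Xᵢ Xⱼ v` is `sᵢ sⱼ v` exactly when `ℓ (sᵢ sⱼ v) = ℓ v + 2`, a
condition symmetric in `i` and `j`. Hence, in characteristic `2`, `sᵢ ↦ 1 + Xᵢ` respects the
relations of a right-angled Coxeter group and defines a representation `ρ` on `V`.

Two facts about the filtration of `V` by length are used. Every `ρ w - 1` raises the filtration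
degree by one (`magnusRep_sub_mem`), because each `Xᵢ` does. The coefficient of `w` in `ρ w · 1` is
`1` (`magnusRep_top`), because in the expansion along a reduced word only the top term reaches
length `ℓ w`.

If `g` has odd order `q`, there are arbitrarily large `k` with `2 ^ k ≡ 1 mod q`, and for these
`ρ g = ρ (g ^ 2 ^ k) = 1 + (ρ g - 1) ^ 2 ^ k`. Thus `ρ g · 1` agrees with `1` in all lengths below
`2 ^ k`, so comparing coefficients of `g` gives `g = 1`.
-/

namespace RightAngledCoxeter

open CoxeterSystem

variable {B W : Type*} [Group W] {M : CoxeterMatrix B} (cs : CoxeterSystem M W)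

open Classical in
/-- The nil-Coxeter operator `Xᵢ` on formal sums of elements of `W`: it sends `v` to `sᵢ v` if
`ℓ (sᵢ v) > ℓ v`, and to `0` otherwise. Formal sums are encoded as functions of coefficients, so the
definition reads off the coefficient at `v` from the one at `sᵢ v`. -/
noncomputable def nilOp (i : B) : Module.End (ZMod 2) (W → ZMod 2) where
  toFun f v := if cs.length (cs.simple i * v) < cs.length v then f (cs.simple i * v) else 0
  map_add' f g := by
    ext v
    simp only [Pi.add_apply]
    split_ifs <;> simp
  map_smul' c f := by
    ext v
    simp

open Classical in
lemma nilOp_apply (i : B) (f : W → ZMod 2) (v : W) :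
    nilOp cs i f v =
      if cs.length (cs.simple i * v) < cs.length v then f (cs.simple i * v) else 0 := rfl

lemma nilOp_mul_self (i : B) : nilOp cs i * nilOp cs i = 0 := by
  ext f v
  simp only [Module.End.mul_apply, nilOp_apply, simple_mul_simple_cancel_left]
  split_ifs
  · omega
  · rfl
  · rfl

/-- Both composites test whether passing from `v` to `sᵢ sⱼ v` lowers the length by two. -/
lemma nilOp_comm (i j : B) (h : Commute (cs.simple i) (cs.simple j)) :
    nilOp cs i * nilOp cs j = nilOp cs j * nilOp cs i := by
  ext f v
  simp only [Module.End.mul_apply, nilOp_apply]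
  have e : cs.simple i * (cs.simple j * v) = cs.simple j * (cs.simple i * v) := by
    rw [← mul_assoc, h.eq, mul_assoc]
  rw [e]
  have h1 := cs.length_simple_mul v i
  have h2 := cs.length_simple_mul v j
  have h3 := cs.length_simple_mul (cs.simple i * v) j
  have h4 := cs.length_simple_mul (cs.simple j * v) i
  rw [e] at h4
  split_ifs <;> first | rfl | omega

instance charP_end : CharP (Module.End (ZMod 2) (W → ZMod 2)) 2 :=
  charP_of_injective_algebraMap
    (FaithfulSMul.algebraMap_injective (ZMod 2) (Module.End (ZMod 2) (W → ZMod 2))) 2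

lemma one_add_nilOp_sq (i : B) : (1 + nilOp cs i) * (1 + nilOp cs i) = 1 := by
  have h2 : nilOp cs i + nilOp cs i = 0 := CharTwo.add_self_eq_zero _
  simp only [add_mul, mul_add, one_mul, mul_one, nilOp_mul_self, add_zero]
  rw [add_assoc, h2, add_zero]

lemma isLiftable (hra : ∀ i j : B, i ≠ j → M i j = 2 ∨ M i j = 0) :
    M.IsLiftable (fun i => 1 + nilOp cs i) := by
  intro i j
  by_cases hij : i = j
  · subst hij
    simp [one_add_nilOp_sq]
  rcases hra i j hij with h | h
  · have hs : Commute (cs.simple i) (cs.simple j) := by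
      have := cs.simple_mul_simple_pow i j
      rw [h, pow_two] at this
      have h' := eq_inv_of_mul_eq_one_left this
      simpa [Commute, SemiconjBy] using h'
    have hc : Commute (1 + nilOp cs i) (1 + nilOp cs j) :=
      (Commute.one_left _).add_left ((Commute.one_right _).add_right (nilOp_comm cs i j hs))
    simp only [h]
    rw [hc.mul_pow, pow_two, pow_two, one_add_nilOp_sq, one_add_nilOp_sq, one_mul]
  · simp [h]

/-- The representation `sᵢ ↦ 1 + Xᵢ` of a right-angled Coxeter group. -/
noncomputable def magnusRep (hra : ∀ i j : B, i ≠ j → M i j = 2 ∨ M i j = 0) :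
    W →* Module.End (ZMod 2) (W → ZMod 2) :=
  cs.lift ⟨fun i => 1 + nilOp cs i, isLiftable cs hra⟩

lemma magnusRep_simple (hra : ∀ i j : B, i ≠ j → M i j = 2 ∨ M i j = 0) (i : B) :
    magnusRep cs hra (cs.simple i) = 1 + nilOp cs i :=
  cs.lift_apply_simple (isLiftable cs hra) i

/-- The length filtration: formal sums supported on elements of length at least `n`. -/
def lengthFil (n : ℕ) : Submodule (ZMod 2) (W → ZMod 2) where
  carrier := {f | ∀ v, cs.length v < n → f v = 0}
  add_mem' hf hg v hv := by simp [hf v hv, hg v hv]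
  zero_mem' v _ := rfl
  smul_mem' c f hf v hv := by simp [hf v hv]

lemma mem_lengthFil {n : ℕ} {f : W → ZMod 2} :
    f ∈ lengthFil cs n ↔ ∀ v, cs.length v < n → f v = 0 := Iff.rfl

lemma lengthFil_succ_le (n : ℕ) : lengthFil cs (n + 1) ≤ lengthFil cs n :=
  fun _ hf v hv => hf v (Nat.lt_succ_of_lt hv)

lemma nilOp_mem (i : B) {n : ℕ} {f : W → ZMod 2} (hf : f ∈ lengthFil cs n) :
    nilOp cs i f ∈ lengthFil cs (n + 1) := by
  intro v hv
  rw [nilOp_apply]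
  split_ifs with h
  · exact hf _ (by omega)
  · rfl

lemma magnusRep_sub_mem (hra : ∀ i j : B, i ≠ j → M i j = 2 ∨ M i j = 0) (w : W) :
    ∀ (n : ℕ) (f : W → ZMod 2), f ∈ lengthFil cs n →
      (magnusRep cs hra w - 1) f ∈ lengthFil cs (n + 1) := by
  induction w using cs.simple_induction_left with
  | one => intro n f _; simp
  | mul_simple_left w i ih =>
    intro n f hf
    have hw := ih n f hf
    have hwn : magnusRep cs hra w f ∈ lengthFil cs n := by
      have := add_mem (lengthFil_succ_le cs n hw) hf
      simpa using this
    have := add_mem hw (nilOp_mem cs i hwn)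
    convert this using 1
    rw [map_mul, magnusRep_simple]
    simp only [LinearMap.sub_apply, Module.End.mul_apply, LinearMap.add_apply, Module.End.one_apply]
    abel

lemma magnusRep_sub_pow_mem (hra : ∀ i j : B, i ≠ j → M i j = 2 ∨ M i j = 0) (w : W) (k : ℕ)
    (f : W → ZMod 2) : ((magnusRep cs hra w - 1) ^ k) f ∈ lengthFil cs k := by
  induction k with
  | zero => intro v hv; omega
  | succ k ih =>
    rw [pow_succ', Module.End.mul_apply]
    exact magnusRep_sub_mem cs hra w k _ ih

open Classical in
/-- `ρ w · 1` is `w` plus a formal sum of elements of length at most `ℓ w` other than `w`. -/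
lemma magnusRep_top (hra : ∀ i j : B, i ≠ j → M i j = 2 ∨ M i j = 0) (n : ℕ) :
    ∀ w : W, cs.length w = n →
      (∀ v, n < cs.length v → magnusRep cs hra w (Pi.single 1 1) v = 0) ∧
        magnusRep cs hra w (Pi.single 1 1) w = 1 := by
  induction n with
  | zero =>
    intro w hw
    obtain rfl := cs.length_eq_zero_iff.mp hw
    refine ⟨fun v hv => ?_, by simp⟩
    have : v ≠ 1 := by
      rintro rfl
      simp at hv
    simp [this]
  | succ n ih =>
    intro w hw
    have hne : w ≠ 1 := by
      rintro rfl
      simp at hw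
    obtain ⟨i, hi⟩ := cs.exists_leftDescent_of_ne_one hne
    have hi' := cs.isLeftDescent_iff.mp hi
    obtain ⟨h1, h2⟩ := ih (cs.simple i * w) (by omega)
    have hexp : ∀ v, magnusRep cs hra w (Pi.single 1 1) v =
        magnusRep cs hra (cs.simple i * w) (Pi.single 1 1) v +
          nilOp cs i (magnusRep cs hra (cs.simple i * w) (Pi.single 1 1)) v := by
      intro v
      conv_lhs => rw [← cs.simple_mul_simple_cancel_left (w := w) i, map_mul, magnusRep_simple]
      rfl
    constructor
    · intro v hv
      have := cs.length_simple_mul v i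
      rw [hexp, h1 v (by omega), nilOp_apply, h1 (cs.simple i * v) (by omega)]
      simp
    · rw [hexp, h1 w (by omega), nilOp_apply, if_pos (by omega), h2, zero_add]

lemma eq_one_of_odd_order {B W : Type*} [Group W] {M : CoxeterMatrix B} (cs : CoxeterSystem M W)
    (hra : ∀ i j : B, i ≠ j → M i j = 2 ∨ M i j = 0) (g : W) (q : ℕ) (hq : Odd q) (hg : g ^ q = 1) : g = 1 := by
  classical
  by_contra hne
  -- Euler's theorem gives `2 ^ k ≡ 1 mod q` for every multiple `k` of `φ q`; this one has
  -- `2 ^ k > ℓ g`.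
  let k := q.totient * cs.length g
  have hφ : 0 < q.totient := Nat.totient_pos.mpr hq.pos
  have hmod : 2 ^ k ≡ 1 [MOD q] := by
    have := (Nat.ModEq.pow_totient (Nat.coprime_two_left.mpr hq)).pow (cs.length g)
    rwa [one_pow, ← pow_mul] at this
  have hgk : g ^ 2 ^ k = g := by
    have := pow_eq_pow_iff_modEq.mpr (hmod.of_dvd (orderOf_dvd_of_pow_eq_one hg))
    simpa using this
  have hlt : cs.length g < 2 ^ k :=
    lt_of_lt_of_le Nat.lt_two_pow_self
      (Nat.pow_le_pow_right two_pos (Nat.le_mul_of_pos_left _ hφ))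
  have hρ : magnusRep cs hra g = (magnusRep cs hra g - 1) ^ 2 ^ k + 1 := by
    have := add_pow_char_pow_of_commute 2 k (Commute.one_right (magnusRep cs hra g - 1))
    rwa [sub_add_cancel, one_pow, ← map_pow, hgk] at this
  have htop := (magnusRep_top cs hra _ g rfl).2
  have hlow := magnusRep_sub_pow_mem cs hra g (2 ^ k) (Pi.single 1 1) g hlt
  rw [hρ, LinearMap.add_apply, Pi.add_apply, hlow] at htop
  simp [hne] at htop

end RightAngledCoxeter

/-- In a right-angled Coxeter group (all off-diagonal Coxeter matrix entries are `2` or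
`0 = ∞`), every element of finite order has order a power of `2`. -/
theorem racg_finite_order_elements_have_two_power_order
    {B : Type*} (M : CoxeterMatrix B)
    (hra : ∀ i j : B, i ≠ j → M i j = 2 ∨ M i j = 0)
    (w : M.Group) (hw : IsOfFinOrder w) :
    ∃ n : ℕ, orderOf w = 2 ^ n := by
  obtain ⟨n, q, hq, hn⟩ := Nat.exists_eq_two_pow_mul_odd hw.orderOf_pos.ne'
  refine ⟨n, Nat.dvd_antisymm ?_ ⟨q, hn⟩⟩
  apply orderOf_dvd_of_pow_eq_one
  apply RightAngledCoxeter.eq_one_of_odd_order M.toCoxeterSystem hra _ q hq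
  rw [← pow_mul, ← hn, pow_orderOf_eq_one]
end

section
/- Let (W, S) be a Coxeter system over a Coxeter matrix on an index set B, with simple reflections sᵢ (i ∈ B). If w ∈ W has finite order, then there exist a subset T ⊆ B and an element x ∈ W such that the standard parabolic (special) subgroup W_T generated by {sᵢ : i ∈ T} is finite and x w x⁻¹ ∈ W_T. -/
/-!
The proof is the classical one through the geometric representation `rep` of `W` on `V = B →₀ ℝ`
and the Tits cone in the dual space.

The representation is built from the reflections in the simple roots `α i`, with
`⟨α i^∨, α j⟩ = -2 cos (π / M i j)`. The fundamental fact (`rep_root_nonneg`) is that `w (α i)` has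
nonnegative coordinates as soon as `ℓ (w s i) > ℓ w`; it is proved by induction on the length, by
splitting off from `w` a maximal alternating word in `s i` and one of its descents, which reduces
the claim to an explicit dihedral computation. Consequently every root is positive or negative,
`s i` permutes the positive roots other than `α i`, and each `w` makes only finitely many positive
roots negative.

Let `w` have finite order, and let `F` be the sum over `⟨w⟩` of the translates of the functional
taking the value `1` on all simple roots. Then `F` is `w`-invariant and positive on all but
finitely many positive roots. Moving `F` by simple reflections lowers the number of positive roots
where it is negative, so some translate `G = F ∘ x` is nonnegative on all simple roots
(`exists_dominant`). With `T = {i | G (α i) = 0}`, the stabilizer of `G`, which contains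
`x⁻¹ w x`, lies in `W_T` (`stab_mem_parabolic`), and `W_T` is finite since it acts faithfully on the
roots where `G` vanishes, which are finite in number (`finite_parabolic`).
-/

/-! ### The geometric representation -/

namespace CoxeterGeom

open Polynomial.Chebyshev

variable {B : Type*} {W : Type*} [Group W] {M : CoxeterMatrix B}

/-- The simple root `α i`, a basis vector of the space `B →₀ ℝ` of the geometric
representation. -/
noncomputable def root (i : B) : B →₀ ℝ := Finsupp.single i 1

/-- The simple coroot `α i^∨`, whose value at `α j` is `-2 cos (π / M i j)`. Since `π / 0 = 0`,
an entry `M i j = 0` (that is, `∞`) gives the value `-2`, as it should. -/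
noncomputable def coroot (M : CoxeterMatrix B) (i : B) : Module.Dual ℝ (B →₀ ℝ) :=
  Finsupp.linearCombination ℝ fun j => -2 * Real.cos (Real.pi / M i j)

lemma coroot_root (i j : B) :
    coroot M i (root j) = -2 * Real.cos (Real.pi / M i j) := by
  simp [coroot, root]

lemma coroot_root_self (i : B) : coroot M i (root i) = 2 := by
  simp [coroot_root]

lemma coroot_root_comm (i j : B) : coroot M i (root j) = coroot M j (root i) := by
  rw [coroot_root, coroot_root, M.symmetric]

/-- The reflection `v ↦ v - ⟨α i^∨, v⟩ α i`. -/
noncomputable def simpleRefl (M : CoxeterMatrix B) (i : B) : (B →₀ ℝ) ≃ₗ[ℝ] (B →₀ ℝ) :=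
  Module.reflection (coroot_root_self (M := M) i)

lemma refl_apply (i : B) (v : B →₀ ℝ) : simpleRefl M i v = v - coroot M i v • root i :=
  Module.reflection_apply _ _

/-- The reflections satisfy the Coxeter relations: for `i ≠ j` and `M i j ≠ 0`, the product of the
reflections in `α i` and `α j` is a rotation by the angle `2π / M i j` in the plane they span. -/
lemma refl_isLiftable : M.IsLiftable (simpleRefl M) := by
  intro i j
  by_cases hij : i = j
  · subst hij
    rw [M.diagonal, pow_one]
    ext1 v
    exact Module.involutive_reflection (coroot_root_self (M := M) i) v
  by_cases h0 : M i j = 0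
  · rw [h0, pow_zero]
  have h1 : M i j ≠ 1 := M.off_diagonal i j hij
  have hji : coroot M j (root i) = -2 * Real.cos (Real.pi / M i j) := by
    rw [coroot_root_comm, coroot_root]
  apply LinearEquiv.ext
  intro z
  set m := M i j with hm
  set θ : ℝ := Real.pi / m with hθ
  have hm0 : (m : ℝ) ≠ 0 := by exact_mod_cast h0
  have hmθ : m * θ = Real.pi := by rw [hθ]; field_simp
  have ht : 2 * Real.cos (2 * θ) = coroot M i (root j) * coroot M j (root i) - 2 := by
    rw [hji, coroot_root, ← hm, ← hθ, Real.cos_two_mul]; ring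
  have key := Module.reflection_mul_reflection_pow_apply (coroot_root_self (M := M) i)
    (coroot_root_self (M := M) j) m z _ ht
  change ((simpleRefl M i * simpleRefl M j) ^ m) z = _ at key
  rw [key]
  simp only [LinearEquiv.coe_one, id_eq]
  by_cases h2 : m = 2
  · have hc : Real.cos θ = 0 := by rw [hθ, h2]; simp
    have ht2 : 2 * Real.cos (2 * θ) = -2 := by rw [Real.cos_two_mul, hc]; ring
    rw [ht2, hji, coroot_root, ← hm, ← hθ, hc, h2]
    norm_num
    module
  have hm3 : (3 : ℝ) ≤ m := by exact_mod_cast (by omega : 3 ≤ m)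
  have hθ0 : 0 < θ := div_pos Real.pi_pos (by linarith)
  have hsin : Real.sin (2 * θ) ≠ 0 := by
    apply ne_of_gt
    apply Real.sin_pos_of_pos_of_lt_pi (by linarith)
    nlinarith
  have hS (n : ℤ) : (S ℝ n).eval (2 * Real.cos (2 * θ)) =
      Real.sin ((n + 1) * (2 * θ)) / Real.sin (2 * θ) :=
    (eq_div_iff hsin).2 (S_two_mul_real_cos _ _)
  rcases Nat.even_or_odd' m with ⟨p, hp | hp⟩
  · have e1 : ((m : ℤ) - 2) / 2 = p - 1 := by omega
    have e2 : ((m : ℤ) - 1) / 2 = p - 1 := by omega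
    have hz : (S ℝ ((p : ℤ) - 1)).eval (2 * Real.cos (2 * θ)) = 0 := by
      rw [hS]
      have : (((p : ℤ) - 1 : ℤ) + 1 : ℝ) * (2 * θ) = Real.pi := by
        rw [← hmθ, hp]; push_cast; ring
      rw [this]; simp
    rw [e1, e2, hz]; simp
  · have e1 : ((m : ℤ) - 2) / 2 = p - 1 := by omega
    have e2 : ((m : ℤ) - 1) / 2 = p := by omega
    have e3 : ((m : ℤ) - 3) / 2 = p - 1 := by omega
    have e4 : (m : ℤ) / 2 = p := by omega
    have hz : (S ℝ (p : ℤ)).eval (2 * Real.cos (2 * θ)) +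
        (S ℝ ((p : ℤ) - 1)).eval (2 * Real.cos (2 * θ)) = 0 := by
      rw [hS, hS]
      have : (((p : ℤ) : ℝ) + 1) * (2 * θ) =
          2 * Real.pi - (((p : ℤ) - 1 : ℤ) + 1 : ℝ) * (2 * θ) := by
        rw [← hmθ, hp]; push_cast; ring
      rw [this, Real.sin_two_pi_sub]; ring
    rw [e1, e2, e3, e4, hz]; simp

/-- The geometric representation of the Coxeter group on `B →₀ ℝ`. -/
noncomputable def rep (cs : CoxeterSystem M W) : W →* ((B →₀ ℝ) ≃ₗ[ℝ] (B →₀ ℝ)) :=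
  cs.lift ⟨simpleRefl M, refl_isLiftable⟩

variable (cs : CoxeterSystem M W)

lemma rep_simple (i : B) (v : B →₀ ℝ) :
    rep cs (cs.simple i) v = v - coroot M i v • root i := by
  rw [rep, cs.lift_apply_simple, refl_apply]

lemma rep_mul (u w : W) (v : B →₀ ℝ) : rep cs (u * w) v = rep cs u (rep cs w v) := by
  rw [map_mul, LinearEquiv.mul_apply]

lemma rep_one (v : B →₀ ℝ) : rep cs 1 v = v := by
  rw [map_one]; rfl

lemma rep_inv_apply (w : W) (v : B →₀ ℝ) : rep cs w⁻¹ (rep cs w v) = v := by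
  rw [← rep_mul, inv_mul_cancel, rep_one]

lemma rep_apply_inv (w : W) (v : B →₀ ℝ) : rep cs w (rep cs w⁻¹ v) = v := by
  rw [← rep_mul, mul_inv_cancel, rep_one]

lemma rep_simple_root (i : B) : rep cs (cs.simple i) (root i) = -root i := by
  rw [rep_simple, coroot_root_self]; module

lemma root_nonneg (i : B) : 0 ≤ root i := by
  simp [root]

/-! ### Positivity of roots -/

/-- An element of the dihedral subgroup `⟨s i, s j⟩` given by an alternating word ending in `j`
of length less than `M i j` sends `α i` to a nonnegative combination of `α i` and `α j`. -/
lemma dihedral_pos {i j : B} (hij : i ≠ j) (k : ℕ) (hk : M i j = 0 ∨ k < M i j) :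
    ∃ a b : ℝ, 0 ≤ a ∧ 0 ≤ b ∧
      rep cs (cs.wordProd (CoxeterSystem.alternatingWord i j k)) (root i) =
        a • root i + b • root j := by
  -- The coefficients are consecutive terms of a sequence `x` obeying the recurrence of
  -- `sin (n θ) / sin θ` with `θ = π / M i j`, which degenerates to `n` for `θ = 0`.
  set c : ℝ := 2 * Real.cos (Real.pi / M i j) with hc
  have hji : coroot M j (root i) = -c := by
    rw [coroot_root_comm, coroot_root, hc]; ring
  have hij' : coroot M i (root j) = -c := by
    rw [coroot_root, hc]; ring
  have general (x : ℕ → ℝ) (x0 : x 0 = 0) (x1 : x 1 = 1)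
      (hx : ∀ n, x (n + 2) = c * x (n + 1) - x n) (n : ℕ) :
      rep cs (cs.wordProd (CoxeterSystem.alternatingWord i j n)) (root i) =
        if Even n then x (n + 1) • root i + x n • root j
        else x n • root i + x (n + 1) • root j := by
    induction n with
    | zero => simp [CoxeterSystem.alternatingWord, x0, x1]
    | succ n ih =>
      rw [CoxeterSystem.alternatingWord_succ', cs.wordProd_cons, rep_mul, ih]
      by_cases hn : Even n
      · have hn' : ¬ Even (n + 1) := by simp [hn, parity_simps]
        rw [if_pos hn, if_pos hn, if_neg hn', rep_simple, map_add, map_smul, map_smul, hji,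
          coroot_root_self, hx]
        simp only [smul_eq_mul]
        module
      · have hn' : Even (n + 1) := by simp [hn, parity_simps]
        rw [if_neg hn, if_neg hn, if_pos hn', rep_simple, map_add, map_smul, map_smul, hij',
          coroot_root_self, hx]
        simp only [smul_eq_mul]
        module
  obtain ⟨x, x0, x1, hx, hxk, hxk'⟩ : ∃ x : ℕ → ℝ, x 0 = 0 ∧ x 1 = 1 ∧
      (∀ n, x (n + 2) = c * x (n + 1) - x n) ∧ 0 ≤ x k ∧ 0 ≤ x (k + 1) := by
    rcases Nat.eq_zero_or_pos (M i j) with h0 | hpos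
    · refine ⟨fun n => n, by simp, by simp, fun n => ?_, by positivity, by positivity⟩
      rw [hc, h0]; push_cast; simp; ring
    · have hkM : k < M i j := hk.resolve_left (by omega)
      have h1 : M i j ≠ 1 := M.off_diagonal i j hij
      set θ : ℝ := Real.pi / M i j with hθ
      have hM0 : (0 : ℝ) < M i j := by exact_mod_cast hpos
      have hM2 : (2 : ℝ) ≤ M i j := by exact_mod_cast (by omega : 2 ≤ M i j)
      have hθ0 : 0 < θ := div_pos Real.pi_pos hM0
      have hMθ : M i j * θ = Real.pi := by rw [hθ]; field_simp
      have hs : 0 < Real.sin θ := Real.sin_pos_of_pos_of_lt_pi hθ0 (by nlinarith)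
      have hnn (n : ℕ) (hn : n ≤ M i j) : 0 ≤ Real.sin (n * θ) / Real.sin θ := by
        refine div_nonneg (Real.sin_nonneg_of_nonneg_of_le_pi (by positivity) ?_) hs.le
        rw [← hMθ]
        gcongr
      refine ⟨fun n => Real.sin (n * θ) / Real.sin θ, by simp, by simp [hs.ne'], fun n => ?_,
        hnn _ (by omega), hnn _ (by omega)⟩
      have e2 : ((n + 2 : ℕ) : ℝ) * θ = ((n + 1 : ℕ) : ℝ) * θ + θ := by push_cast; ring
      have e0 : (n : ℝ) * θ = ((n + 1 : ℕ) : ℝ) * θ - θ := by push_cast; ring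
      simp only [e2, e0, Real.sin_add, Real.sin_sub, hc]
      field_simp
      ring
  rw [general x x0 x1 hx k]
  split_ifs
  · exact ⟨_, _, hxk', hxk, rfl⟩
  · exact ⟨_, _, hxk, hxk', rfl⟩

/-- If `w = v * u` with `u` an alternating word in `i, j` ending in `j`, lengths adding, and
`ℓ (w s i) > ℓ w`, then `u` is shorter than the braid word. -/
lemma alternating_lt {i j : B} (w v : W) (k : ℕ)
    (hw : w = v * cs.wordProd (CoxeterSystem.alternatingWord i j k))
    (hl : cs.length w = cs.length v + k) (hi : ¬ cs.IsRightDescent w i) :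
    M i j = 0 ∨ k < M i j := by
  by_contra! hcon
  obtain ⟨h0, hk⟩ := hcon
  apply hi
  rw [CoxeterSystem.IsRightDescent]
  set m := M i j with hm
  -- The tail of length `m` of the word may be replaced by the other braid word, ending in `i`.
  have split (n : ℕ) : ∃ ω : List B, ω.length = n ∧
      CoxeterSystem.alternatingWord i j (n + m) = ω ++ CoxeterSystem.alternatingWord i j m := by
    induction n with
    | zero => exact ⟨[], rfl, by simp⟩
    | succ n ih =>
      obtain ⟨ω, h1, h2⟩ := ih
      refine ⟨(if Even (n + m) then j else i) :: ω, by simp [h1], ?_⟩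
      rw [Nat.add_right_comm, CoxeterSystem.alternatingWord_succ', h2, List.cons_append]
  obtain ⟨ω, h1, h2⟩ := split (k - m)
  rw [Nat.sub_add_cancel hk] at h2
  have hbraid := cs.wordProd_braidWord_eq i j
  rw [CoxeterSystem.braidWord, CoxeterSystem.braidWord, M.symmetric j i, ← hm] at hbraid
  obtain ⟨n, hn⟩ := Nat.exists_eq_succ_of_ne_zero h0
  have e : w * cs.simple i =
      v * cs.wordProd (ω ++ CoxeterSystem.alternatingWord i j n) := by
    rw [hw, h2, cs.wordProd_append, hbraid, hn, Nat.succ_eq_add_one,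
      CoxeterSystem.alternatingWord_succ, cs.wordProd_concat, cs.wordProd_append]
    simp [mul_assoc]
  have := cs.length_mul_le v (cs.wordProd (ω ++ CoxeterSystem.alternatingWord i j n))
  have h4 := cs.length_wordProd_le (ω ++ CoxeterSystem.alternatingWord i j n)
  rw [List.length_append, CoxeterSystem.length_alternatingWord, h1] at h4
  rw [e, hl]
  omega

/-- The basic positivity theorem: if `ℓ (w s i) > ℓ w` then `w (α i)` is a positive root. -/
theorem rep_root_nonneg (w : W) (i : B) (hi : ¬ cs.IsRightDescent w i) :
    0 ≤ rep cs w (root i) := by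
  induction hn : cs.length w using Nat.strong_induction_on generalizing w i with
  | _ n ih =>
  by_cases hw1 : w = 1
  · rw [hw1, rep_one]; exact root_nonneg i
  obtain ⟨j, hj⟩ := cs.exists_rightDescent_of_ne_one hw1
  have hij : i ≠ j := by rintro rfl; exact hi hj
  -- Split off from `w` the longest possible alternating word in `i, j` ending in `j`.
  let Q : ℕ → Prop := fun k => ∃ v : W,
    w = v * cs.wordProd (CoxeterSystem.alternatingWord i j k) ∧ cs.length w = cs.length v + k
  have hQ1 : Q 1 := by
    refine ⟨w * cs.simple j, by simp [CoxeterSystem.alternatingWord], ?_⟩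
    have := (cs.isRightDescent_iff).1 hj
    omega
  have hlen : 1 ≤ cs.length w := by
    have := (cs.isRightDescent_iff).1 hj
    omega
  classical
  let k := Nat.findGreatest Q (cs.length w)
  have hQk : Q k := Nat.findGreatest_spec hlen hQ1
  have hk1 : 1 ≤ k := Nat.le_findGreatest hlen hQ1
  have hmax : ¬ Q (k + 1) := by
    intro h
    have hle : k + 1 ≤ cs.length w := by obtain ⟨v, _, h⟩ := h; omega
    have := Nat.le_findGreatest hle h
    change k + 1 ≤ k at this
    omega
  obtain ⟨v, hv, hvl⟩ := hQk
  obtain ⟨a, b, ha, hb, hab⟩ := dihedral_pos cs hij k (alternating_lt cs w v k hv hvl hi)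
  have hnext : ¬ cs.IsRightDescent v (if Even k then j else i) := by
    intro hd
    apply hmax
    have := (cs.isRightDescent_iff).1 hd
    refine ⟨v * cs.simple (if Even k then j else i), ?_, by omega⟩
    rw [CoxeterSystem.alternatingWord_succ', cs.wordProd_cons, hv]
    simp [mul_assoc]
  have hfirst : ¬ cs.IsRightDescent v (if Even k then i else j) := by
    intro hd
    have h1 := (cs.isRightDescent_iff).1 hd
    obtain ⟨l, hl⟩ := Nat.exists_eq_succ_of_ne_zero (by omega : k ≠ 0)
    have hpar : (if Even k then i else j) = (if Even l then j else i) := by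
      rw [hl]; by_cases h : Even l <;> simp [h, parity_simps]
    rw [hl, Nat.succ_eq_add_one, CoxeterSystem.alternatingWord_succ', ← hpar, cs.wordProd_cons,
      ← mul_assoc] at hv
    have h2 := cs.length_mul_le (v * cs.simple (if Even k then i else j))
      (cs.wordProd (CoxeterSystem.alternatingWord i j l))
    have h3 := cs.length_wordProd_le (CoxeterSystem.alternatingWord i j l)
    rw [CoxeterSystem.length_alternatingWord] at h3
    rw [← hv] at h2
    omega
  have hvi : ¬ cs.IsRightDescent v i ∧ ¬ cs.IsRightDescent v j := by
    by_cases h : Even k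
    · rw [if_pos h] at hnext hfirst; exact ⟨hfirst, hnext⟩
    · rw [if_neg h] at hnext hfirst; exact ⟨hnext, hfirst⟩
  have hvn : cs.length v < n := by omega
  have pi := ih _ hvn v i hvi.1 rfl
  have pj := ih _ hvn v j hvi.2 rfl
  rw [hv, rep_mul, hab, map_add, map_smul, map_smul]
  exact add_nonneg (smul_nonneg ha pi) (smul_nonneg hb pj)

lemma rep_root_nonpos (w : W) (i : B) (hi : cs.IsRightDescent w i) :
    rep cs w (root i) ≤ 0 := by
  have h := rep_root_nonneg cs (w * cs.simple i) i
    ((cs.isRightDescent_iff_not_isRightDescent_mul).1 hi)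
  rw [rep_mul, rep_simple_root, map_neg] at h
  exact neg_nonneg.1 h

/-! ### Roots and inversions -/

/-- The set `Φ⁺` of positive roots: vectors `w (α i)` with nonnegative coordinates. -/
def posRoots : Set (B →₀ ℝ) := {v | (∃ w i, v = rep cs w (root i)) ∧ 0 ≤ v}

lemma root_mem (i : B) : root i ∈ posRoots cs :=
  ⟨⟨1, i, (rep_one cs _).symm⟩, root_nonneg i⟩

lemma nonneg_or_nonpos (w : W) (i : B) :
    0 ≤ rep cs w (root i) ∨ rep cs w (root i) ≤ 0 := by
  by_cases h : cs.IsRightDescent w i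
  · exact Or.inr (rep_root_nonpos cs w i h)
  · exact Or.inl (rep_root_nonneg cs w i h)

/-- The invariant symmetric bilinear form with `form (α i) (α j) = -2 cos (π / M i j)`. -/
noncomputable def form (M : CoxeterMatrix B) : (B →₀ ℝ) →ₗ[ℝ] Module.Dual ℝ (B →₀ ℝ) :=
  Finsupp.linearCombination ℝ (coroot M)

lemma form_root (i : B) : form M (root i) = coroot M i := by
  simp [form, root]

lemma form_apply_root (v : B →₀ ℝ) (i : B) : form M v (root i) = coroot M i v := by
  have : (form M).flip (root i) = coroot M i := by
    ext j
    have := coroot_root_comm (M := M) j i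
    simpa [form, root] using this
  rw [← this]; rfl

lemma form_rep (w : W) (v : B →₀ ℝ) : form M (rep cs w v) (rep cs w v) = form M v v := by
  induction w using cs.simple_induction_left with
  | one => rw [rep_one]
  | mul_simple_left w i ih =>
    rw [rep_mul, ← ih]
    generalize rep cs w v = u
    simp only [rep_simple, map_sub, map_smul, LinearMap.sub_apply, LinearMap.smul_apply,
      form_root, form_apply_root, coroot_root_self, smul_eq_mul]
    ring

/-- A simple reflection permutes the positive roots other than its own simple root. -/
lemma simple_mem {i : B} {v : B →₀ ℝ} (hv : v ∈ posRoots cs) (hne : v ≠ root i) :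
    rep cs (cs.simple i) v ∈ posRoots cs := by
  obtain ⟨⟨w, j, rfl⟩, hpos⟩ := hv
  refine ⟨⟨cs.simple i * w, j, by rw [rep_mul]⟩, ?_⟩
  rcases nonneg_or_nonpos cs (cs.simple i * w) j with h | h
  · rwa [rep_mul] at h
  exfalso
  apply hne
  rw [rep_mul, rep_simple] at h
  have hform := form_rep cs w (root j)
  rw [form_root, coroot_root_self] at hform
  generalize rep cs w (root j) = v at *
  have hz (l : B) (hl : l ≠ i) : v l = 0 := by
    have h1 := h l
    have h2 := hpos l
    simp [root, hl.symm] at h1 h2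
    linarith
  have hvi : v = v i • root i := by
    ext l
    by_cases hl : l = i
    · subst hl; simp [root]
    · simp [root, hz l hl, Ne.symm hl]
  have h0 : 0 ≤ v i := hpos i
  rw [hvi] at hform
  simp only [map_smul, LinearMap.smul_apply, form_root, coroot_root_self, smul_eq_mul] at hform
  have : v i = 1 := by nlinarith
  rw [hvi, this, one_smul]

/-- Each element of the group makes only finitely many positive roots negative. -/
lemma finite_inversions (w : W) : {v ∈ posRoots cs | ¬ 0 ≤ rep cs w v}.Finite := by
  induction w using cs.simple_induction_left with
  | one =>
    convert Set.finite_empty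
    ext v
    simp only [Set.mem_ofPred_eq, rep_one, Set.mem_empty_iff_false, iff_false, not_and, not_not]
    exact fun h => h.2
  | mul_simple_left w i ih =>
    refine (ih.union (Set.finite_singleton (rep cs w⁻¹ (root i)))).subset ?_
    rintro v ⟨hv, hneg⟩
    by_cases h : 0 ≤ rep cs w v
    · right
      by_contra hne
      apply hneg
      rw [rep_mul]
      refine (simple_mem cs (i := i) ⟨?_, h⟩ ?_).2
      · obtain ⟨⟨u, j, rfl⟩, _⟩ := hv
        exact ⟨w * u, j, by rw [rep_mul]⟩
      · intro he
        apply hne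
        rw [Set.mem_singleton_iff, ← he, rep_inv_apply]
    · exact Or.inl ⟨hv, h⟩

lemma ne_zero_of_mem {v : B →₀ ℝ} (hv : v ∈ posRoots cs) : v ≠ 0 := by
  obtain ⟨⟨w, i, rfl⟩, _⟩ := hv
  intro h
  rw [LinearEquiv.map_eq_zero_iff] at h
  simp [root] at h

/-! ### Linear functionals and the dominant chamber -/

/-- The functional taking the value `1` on every simple root. -/
noncomputable def height (B : Type*) : Module.Dual ℝ (B →₀ ℝ) :=
  Finsupp.linearCombination ℝ fun _ => 1

lemma height_pos {v : B →₀ ℝ} (hv : v ∈ posRoots cs) : 0 < height B v := by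
  have h0 : 0 ≤ v := hv.2
  rw [height, Finsupp.linearCombination_apply]
  obtain ⟨i, hi⟩ := Finsupp.ne_iff.1 (ne_zero_of_mem cs hv)
  refine Finset.sum_pos' (fun j _ => by simpa using h0 j) ⟨i, by simpa using hi, ?_⟩
  have := h0 i
  simp at hi this ⊢
  exact lt_of_le_of_ne this (Ne.symm hi)

/-- A functional which is nonnegative on simple roots is nonnegative on the positive cone. -/
lemma dominant_nonneg {G : Module.Dual ℝ (B →₀ ℝ)} (hG : ∀ i, 0 ≤ G (root i)) {v : B →₀ ℝ}
    (hv : 0 ≤ v) : 0 ≤ G v := by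
  have : G v = v.sum fun i a => a * G (root i) := by
    conv_lhs => rw [← Finsupp.sum_single v, map_finsuppSum]
    refine Finsupp.sum_congr fun i _ => ?_
    rw [← smul_eq_mul, ← map_smul]; simp [root]
  rw [this]
  exact Finset.sum_nonneg fun i _ => mul_nonneg (hv i) (hG i)

/-- A functional that is positive on all but finitely many positive roots can be moved by the group
into the closed dominant chamber, and stays positive on all but finitely many positive roots. -/
lemma exists_dominant (G : Module.Dual ℝ (B →₀ ℝ)) (hG : {v ∈ posRoots cs | G v ≤ 0}.Finite) :
    ∃ x : W, {v ∈ posRoots cs | G (rep cs x v) ≤ 0}.Finite ∧ ∀ i, 0 ≤ G (rep cs x (root i)) := by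
  induction hn : {v ∈ posRoots cs | G v < 0}.ncard using Nat.strong_induction_on
    generalizing G with
  | _ n ih =>
  by_cases hdom : ∀ i, 0 ≤ G (root i)
  · exact ⟨1, by simpa only [rep_one] using hG, by simpa only [rep_one] using hdom⟩
  push Not at hdom
  obtain ⟨i, hi⟩ := hdom
  let r := rep cs (cs.simple i)
  have hrinj : Function.Injective r := r.injective
  have hrr (v) : r (r v) = v := by
    simp only [r]; rw [← rep_mul, cs.simple_mul_simple_self, rep_one]
  let G' : Module.Dual ℝ (B →₀ ℝ) := G.comp r.toLinearMap
  have hG' (v) : G' v = G (r v) := rfl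
  have hneg : {v ∈ posRoots cs | G v < 0}.Finite := hG.subset fun v hv => ⟨hv.1, hv.2.le⟩
  have hfin : {v ∈ posRoots cs | G' v ≤ 0}.Finite := by
    refine ((hG.preimage hrinj.injOn).union (Set.finite_singleton (root i))).subset ?_
    rintro v ⟨hv, hle⟩
    by_cases he : v = root i
    · exact Or.inr he
    · exact Or.inl ⟨simple_mem cs hv he, hle⟩
  -- `r` maps the positive roots where `G'` is negative into those where `G` is, missing `α i`.
  have hlt : {v ∈ posRoots cs | G' v < 0}.ncard < n := by
    rw [← hn, ← Set.ncard_image_of_injective _ hrinj]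
    refine Set.ncard_lt_ncard ⟨?_, ?_⟩ hneg
    · rintro _ ⟨v, ⟨hv, hlt⟩, rfl⟩
      refine ⟨simple_mem cs hv ?_, hlt⟩
      rintro rfl
      rw [hG'] at hlt
      simp only [r, rep_simple_root, map_neg] at hlt
      linarith
    · intro hsub
      obtain ⟨v, ⟨hv, -⟩, he⟩ := hsub ⟨root_mem cs i, hi⟩
      have hv' : v = -root i := by
        rw [← hrr v, he]; exact rep_simple_root cs i
      have := hv.2 i
      rw [hv'] at this
      simp [root] at this
      linarith
  obtain ⟨x, hx1, hx2⟩ := ih _ hlt G' hfin rfl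
  refine ⟨cs.simple i * x, ?_, ?_⟩
  · simpa only [rep_mul, hG', r] using hx1
  · simpa only [rep_mul, hG', r] using hx2

/-! ### Stabilizers of dominant functionals -/

section Stabilizer

variable {G : Module.Dual ℝ (B →₀ ℝ)}

/-- A right descent of an element stabilizing a dominant functional `G` lies on a wall of `G`. -/
lemma descent_wall (hG : ∀ i, 0 ≤ G (root i)) {u : W} (hu : ∀ v, G (rep cs u v) = G v) {i : B}
    (hi : cs.IsRightDescent u i) : G (root i) = 0 := by
  have h := dominant_nonneg hG (neg_nonneg.2 (rep_root_nonpos cs u i hi))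
  rw [map_neg, hu] at h
  linarith [hG i]

lemma simple_stab {i : B} (hi : G (root i) = 0) (v : B →₀ ℝ) :
    G (rep cs (cs.simple i) v) = G v := by
  rw [rep_simple, map_sub, map_smul, hi]; simp

lemma parabolic_stab {u : W} (hu : u ∈ Subgroup.closure (cs.simple '' {i | G (root i) = 0}))
    (v : B →₀ ℝ) : G (rep cs u v) = G v := by
  induction hu using Subgroup.closure_induction generalizing v with
  | mem x hx => obtain ⟨i, hi, rfl⟩ := hx; exact simple_stab cs hi v
  | one => rw [rep_one]
  | mul x y _ _ hx hy => rw [rep_mul, hx, hy]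
  | inv x _ hx => rw [← hx, rep_apply_inv]

/-- The stabilizer of a dominant functional is contained in the standard parabolic subgroup
generated by its walls. -/
lemma stab_mem_parabolic (hG : ∀ i, 0 ≤ G (root i)) (u : W)
    (hu : ∀ v, G (rep cs u v) = G v) :
    u ∈ Subgroup.closure (cs.simple '' {i | G (root i) = 0}) := by
  induction hn : cs.length u using Nat.strong_induction_on generalizing u with
  | _ n ih =>
  by_cases h1 : u = 1
  · rw [h1]; exact one_mem _
  obtain ⟨i, hi⟩ := cs.exists_rightDescent_of_ne_one h1
  have hw := descent_wall cs hG hu hi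
  have := ih _ (hn ▸ hi) (u * cs.simple i)
    (fun v => by rw [rep_mul, hu, simple_stab cs hw]) rfl
  have hs : cs.simple i ∈ Subgroup.closure (cs.simple '' {i | G (root i) = 0}) :=
    Subgroup.subset_closure ⟨i, hw, rfl⟩
  simpa using mul_mem this hs

/-- If a dominant functional vanishes on only finitely many positive roots, the standard parabolic
subgroup generated by its walls is finite: it acts faithfully on a finite set of roots. -/
lemma finite_parabolic (hG : ∀ i, 0 ≤ G (root i))
    (hfin : {v ∈ posRoots cs | G v ≤ 0}.Finite) :
    Finite (Subgroup.closure (cs.simple '' {i | G (root i) = 0})) := by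
  set T : Set B := {i | G (root i) = 0} with hT
  set Z := {v ∈ posRoots cs | G v ≤ 0} with hZ
  have hZ' : (Z ∪ Neg.neg ⁻¹' Z).Finite := hfin.union (hfin.preimage neg_injective.injOn)
  have hrootinj : Function.Injective (root : B → B →₀ ℝ) :=
    Finsupp.single_left_injective one_ne_zero
  have hTfin : T.Finite :=
    (hfin.preimage hrootinj.injOn).subset fun i hi => ⟨root_mem cs i, le_of_eq hi⟩
  have := hTfin.to_subtype
  have := hZ'.to_subtype
  let f : Subgroup.closure (cs.simple '' T) → (T → (Z ∪ Neg.neg ⁻¹' Z : Set (B →₀ ℝ))) :=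
    fun u i => ⟨rep cs u.1 (root i.1), by
      have h0 : G (rep cs u.1 (root i.1)) = 0 := by rw [parabolic_stab cs u.2]; exact i.2
      rcases nonneg_or_nonpos cs u.1 i.1 with h | h
      · exact Or.inl ⟨⟨⟨_, _, rfl⟩, h⟩, h0.le⟩
      · refine Or.inr ⟨⟨⟨u.1 * cs.simple i.1, i.1, ?_⟩, neg_nonneg.2 h⟩, ?_⟩
        · rw [rep_mul, rep_simple_root, map_neg]
        · rw [map_neg, h0, neg_zero]⟩
  apply Finite.of_injective f
  intro u u' huu
  have hfix (i : B) (hi : i ∈ T) : rep cs (u'⁻¹ * u).1 (root i) = root i := by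
    have h : rep cs u.1 (root i) = rep cs u'.1 (root i) :=
      congrArg Subtype.val (congrFun huu ⟨i, hi⟩)
    change rep cs (u'.1⁻¹ * u.1) (root i) = _
    rw [rep_mul, h, rep_inv_apply]
  by_contra hne
  have hne1 : (u'⁻¹ * u).1 ≠ 1 := by
    intro h
    apply hne
    have : u'⁻¹ * u = 1 := Subtype.ext h
    exact (inv_mul_eq_one.1 this).symm
  obtain ⟨i, hi⟩ := cs.exists_rightDescent_of_ne_one hne1
  have hiT : i ∈ T := descent_wall cs hG (parabolic_stab cs (u'⁻¹ * u).2) hi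
  have h := rep_root_nonpos cs _ i hi
  rw [hfix i hiT] at h
  have := h i
  simp [root] at this
  linarith

end Stabilizer

end CoxeterGeom

open CoxeterGeom

/-- In a Coxeter system `(W, S)`, every element of finite order is conjugate into a finite
standard parabolic (special) subgroup: there exist `T ⊆ B` and `x ∈ W` such that the subgroup
generated by the simple reflections indexed by `T` is finite and contains `x w x⁻¹`. -/
theorem finite_order_element_conjugate_into_finite_parabolic
    {B : Type*} {W : Type*} [Group W] {M : CoxeterMatrix B} (cs : CoxeterSystem M W)
    (w : W) (hw : IsOfFinOrder w) :
    ∃ (T : Set B) (x : W),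
      Finite (Subgroup.closure (cs.simple '' T)) ∧
      x * w * x⁻¹ ∈ Subgroup.closure (cs.simple '' T) := by
  have hn : 0 < orderOf w := hw.orderOf_pos
  -- Average the height functional over the cyclic group generated by `w`.
  let F : Module.Dual ℝ (B →₀ ℝ) :=
    ∑ k ∈ Finset.range (orderOf w), (height B).comp (rep cs (w ^ k)).toLinearMap
  have hF (v) : F v = ∑ k ∈ Finset.range (orderOf w), height B (rep cs (w ^ k) v) := by
    simp [F, LinearMap.sum_apply]
  have hFw (v) : F (rep cs w v) = F v := by
    have h1 := Finset.sum_range_succ (fun k => height B (rep cs (w ^ k) v)) (orderOf w)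
    rw [Finset.sum_range_succ', pow_orderOf_eq_one, pow_zero] at h1
    rw [hF, hF, ← add_right_cancel h1]
    exact Finset.sum_congr rfl fun k _ => by rw [← rep_mul, pow_succ]
  have hFfin : {v ∈ posRoots cs | F v ≤ 0}.Finite := by
    refine (Set.Finite.biUnion (Finset.range (orderOf w)).finite_toSet
      fun k _ => finite_inversions cs (w ^ k)).subset ?_
    rintro v ⟨hv, hle⟩
    by_contra hcon
    simp only [Set.mem_iUnion, not_exists] at hcon
    apply hle.not_gt
    rw [hF]
    refine Finset.sum_pos (fun k hk => height_pos cs ⟨?_, ?_⟩) ⟨0, by simpa using hn⟩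
    · obtain ⟨⟨u, j, rfl⟩, _⟩ := hv
      exact ⟨w ^ k * u, j, by rw [rep_mul]⟩
    · by_contra hneg
      exact hcon k hk ⟨hv, hneg⟩
  obtain ⟨x, hx1, hx2⟩ := exists_dominant cs F hFfin
  let G : Module.Dual ℝ (B →₀ ℝ) := F.comp (rep cs x).toLinearMap
  refine ⟨{i | G (root i) = 0}, x⁻¹, finite_parabolic cs (G := G) hx2 hx1,
    stab_mem_parabolic cs (G := G) hx2 _ fun v => ?_⟩
  change F (rep cs x _) = F (rep cs x v)
  rw [← rep_mul, inv_inv, ← mul_assoc, mul_inv_cancel_left, rep_mul, hFw]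
end
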